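/- arXiv:math/0701399 — 2 statements merged into one kernel-verified Lean document; each statement's English description precedes it below -/
import Mathlib

section
/- Let (g,A) be a compatible pair over a field k of characteristic 0 and F an associative k-algebra. Then the upper bound tilde(g,A)(F) = F ⊗ g + Σ_{k≥1} ( I_k(F) ⊗ [g, g^{k+1}] + [F, I_{k−1}(F)] ⊗ g^{k+1} ) is a Lie subalgebra of F ⊗ A under the commutator bracket. -/
open Submodule TensorProduct

variable (K : Type*) [Field K]

/-- The span of all products `a * b`, `a ∈ S`, `b ∈ T` (the subspace `S·T`). -/
def pSpan {R : Type*} [NonUnitalRing R] [Module K R] (S T : Submodule K R) : Submodule K R :=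
  Submodule.span K {x | ∃ a ∈ S, ∃ b ∈ T, x = a * b}

/-- The span of all commutators `a * b - b * a`, `a ∈ S`, `b ∈ T` (the subspace `[S, T]`). -/
def bSpan {R : Type*} [NonUnitalRing R] [Module K R] (S T : Submodule K R) : Submodule K R :=
  Submodule.span K {x | ∃ a ∈ S, ∃ b ∈ T, x = a * b - b * a}

/-- The `k`-th commutator space `S^(k)`: `S^(0) = S`, `S^(k) = [S, S^(k-1)]`.
For `S = ⊤` this is the commutator space `F^(k)` of the algebra. -/
def cSp {R : Type*} [NonUnitalRing R] [Module K R] (S : Submodule K R) : ℕ → Submodule K R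
  | 0 => S
  | (k+1) => bSpan K S (cSp S k)

/-- `IklS K S ℓ k` is `I_k^ℓ(R, S)`: the sum of `S^(λ₁) ⋯ S^(λ_ℓ)` over
`λ₁ + ⋯ + λ_ℓ = k`, defined via the recursion `I_k^1 = S^(k)`,
`I_k^ℓ = Σ_{0 ≤ i ≤ k} S^(i) · I_{k-i}^{ℓ-1}`.  The first argument is the
superscript `ℓ`, the second the subscript `k`; the (unused) value at `ℓ = 0` is `⊥`.
For `S = ⊤` this is `I_k^ℓ(F)`. -/
def IklS {R : Type*} [NonUnitalRing R] [Module K R] (S : Submodule K R) :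
    ℕ → ℕ → Submodule K R
  | 0, _ => ⊥
  | 1, k => cSp K S k
  | (ℓ+2), k => ∑ i ∈ Finset.range (k+1), pSpan K (cSp K S i) (IklS S (ℓ+1) (k-i))

/-- `I_k^{≤ℓ}(F) = Σ_{1 ≤ ℓ' ≤ ℓ} I_k^{ℓ'}(F)`. -/
def Ikle {R : Type*} [NonUnitalRing R] [Module K R] (ℓ k : ℕ) : Submodule K R :=
  ∑ ℓ' ∈ Finset.Icc 1 ℓ, IklS K (⊤ : Submodule K R) ℓ' k

/-- `I_k(F) = Σ_{ℓ ≥ 1} I_k^ℓ(F)`. -/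
def Ik (R : Type*) [NonUnitalRing R] [Module K R] (k : ℕ) : Submodule K R :=
  ⨆ ℓ : ℕ, IklS K (⊤ : Submodule K R) (ℓ + 1) k

/-- `g^n`: the span of all products of `n` elements of `g` (set to `⊥` for `n = 0`). -/
def gPow {R : Type*} [NonUnitalRing R] [Module K R] (g : Submodule K R) : ℕ → Submodule K R
  | 0 => ⊥
  | 1 => g
  | (n+2) => pSpan K g (gPow g (n+1))

/-- The Lie subalgebra (under the commutator bracket) generated by a subspace `S`:
the smallest subspace containing `S` and closed under `(x, y) ↦ x * y - y * x`. -/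
def lieGen {R : Type*} [NonUnitalRing R] [Module K R] (S : Submodule K R) : Submodule K R :=
  sInf {T | S ≤ T ∧ ∀ x ∈ T, ∀ y ∈ T, x * y - y * x ∈ T}

/-- The subspace `S ⊗ T` of `F ⊗[K] A`: the span of all pure tensors `f ⊗ a`
with `f ∈ S`, `a ∈ T`. -/
def tSpan {F A : Type*} [AddCommGroup F] [Module K F] [AddCommGroup A] [Module K A]
    (S : Submodule K F) (T : Submodule K A) : Submodule K (F ⊗[K] A) :=
  Submodule.span K {z | ∃ f ∈ S, ∃ a ∈ T, z = f ⊗ₜ[K] a}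

/-- The current Lie algebra `(g, A)(F)`: the Lie subalgebra of `F ⊗ A` (with the
commutator bracket) generated by `F ⊗ g`. -/
def currentLie {F A : Type*} [NonUnitalRing F] [Module K F] [SMulCommClass K F F]
    [IsScalarTower K F F] [Ring A] [Algebra K A] (g : Submodule K A) :
    Submodule K (F ⊗[K] A) :=
  lieGen K (tSpan K (⊤ : Submodule K F) g)

/-!
Put `U = Σ_{k ≥ 0} I_k(F) ⊗ g^{k+1}`, which contains the upper bound because `[F, I_k] ⊆ I_{k+1}`
and `[g, g^n] ⊆ g^n`. It suffices that the commutator of two elements of `U` lies in the upper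
bound. From `[f ⊗ a, f' ⊗ a'] = [f, f'] ⊗ aa' + f'f ⊗ [a, a']` this reduces to
`I_i I_j ⊆ I_{i+j}`, `[I_i, I_j] ⊆ [F, I_{i+j}]` and `[g^m, g^n] ⊆ [g, g^{m+n-1}]`. The last two
inclusions move factors from one side of the bracket to the other by the cyclic identity
`[ab, c] = [a, bc] + [b, ca]`, until a single factor is left on one side;
a remaining factor `F^(k)` is reduced to `F` by the Jacobi identity.
-/

section SubmoduleLemmas

theorem map₂_map₂_le {k M N P V W : Type*} [CommSemiring k]
    [AddCommMonoid M] [Module k M] [AddCommMonoid N] [Module k N] [AddCommMonoid P] [Module k P]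
    [AddCommMonoid V] [Module k V] [AddCommMonoid W] [Module k W]
    {f : V →ₗ[k] P →ₗ[k] W} {h : M →ₗ[k] N →ₗ[k] V}
    {S : Submodule k M} {T : Submodule k N} {U : Submodule k P} {Q : Submodule k W} :
    map₂ f (map₂ h S T) U ≤ Q ↔ ∀ a ∈ S, ∀ b ∈ T, ∀ c ∈ U, f (h a b) c ∈ Q := by
  refine ⟨fun hQ a ha b hb c hc ↦ hQ (apply_mem_map₂ f (apply_mem_map₂ h ha hb) hc),
    fun hQ ↦ map₂_le.2 fun x hx c hc ↦ ?_⟩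
  have map₂_le_comap : map₂ h S T ≤ Q.comap (f.flip c) :=
    map₂_le.2 fun a ha b hb ↦ hQ a ha b hb c hc
  exact map₂_le_comap hx

theorem sum_submodule_eq_iSup {k M ι : Type*} [Semiring k] [AddCommMonoid M] [Module k M]
    (s : Finset ι) (f : ι → Submodule k M) : ∑ i ∈ s, f i = ⨆ i : s, f i := by
  classical
  rw [iSup_subtype, ← Finset.sup_eq_iSup]
  induction s using Finset.induction_on with
  | empty => rfl
  | insert i s hi ih => rw [Finset.sum_insert hi, Finset.sup_insert, ih, Submodule.add_eq_sup]

end SubmoduleLemmas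

section SpanCalculus

variable {K} {R : Type*} [NonUnitalRing R] [Module K R]

theorem pSpan_le {S T P : Submodule K R} :
    pSpan K S T ≤ P ↔ ∀ a ∈ S, ∀ b ∈ T, a * b ∈ P := by
  simp only [pSpan, span_le, Set.subset_def, Set.mem_ofPred_eq, SetLike.mem_coe]
  grind

theorem bSpan_le {S T P : Submodule K R} :
    bSpan K S T ≤ P ↔ ∀ a ∈ S, ∀ b ∈ T, a * b - b * a ∈ P := by
  simp only [bSpan, span_le, Set.subset_def, Set.mem_ofPred_eq, SetLike.mem_coe]
  grind

theorem mul_mem_pSpan {S T : Submodule K R} {a b : R} (ha : a ∈ S) (hb : b ∈ T) :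
    a * b ∈ pSpan K S T :=
  pSpan_le.1 le_rfl a ha b hb

theorem commutator_mem_bSpan {S T : Submodule K R} {a b : R} (ha : a ∈ S) (hb : b ∈ T) :
    a * b - b * a ∈ bSpan K S T :=
  bSpan_le.1 le_rfl a ha b hb

theorem pSpan_mono {S S' T T' : Submodule K R} (hS : S ≤ S') (hT : T ≤ T') :
    pSpan K S T ≤ pSpan K S' T' :=
  pSpan_le.2 fun _ ha _ hb ↦ mul_mem_pSpan (hS ha) (hT hb)

theorem bSpan_mono {S S' T T' : Submodule K R} (hS : S ≤ S') (hT : T ≤ T') :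
    bSpan K S T ≤ bSpan K S' T' :=
  bSpan_le.2 fun _ ha _ hb ↦ commutator_mem_bSpan (hS ha) (hT hb)

theorem bSpan_comm (S T : Submodule K R) : bSpan K S T = bSpan K T S := by
  have bSpan_le_swap (S T : Submodule K R) : bSpan K S T ≤ bSpan K T S :=
    bSpan_le.2 fun a ha b hb ↦ by
      rw [← neg_sub]
      exact neg_mem (commutator_mem_bSpan hb ha)
  exact le_antisymm (bSpan_le_swap S T) (bSpan_le_swap T S)

variable [SMulCommClass K R R] [IsScalarTower K R R]

variable (K R) in
/-- The commutator `(a, b) ↦ a * b - b * a` as a bilinear map. It makes `bSpan` an instance of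
`Submodule.map₂`; the Lie algebra structure of Mathlib is restricted to unital algebras. -/
def commutatorBilin : R →ₗ[K] R →ₗ[K] R :=
  LinearMap.mul K R - (LinearMap.mul K R).flip

theorem pSpan_eq_map₂ (S T : Submodule K R) : pSpan K S T = map₂ (LinearMap.mul K R) S T :=
  eq_of_forall_ge_iff fun _ ↦ Iff.trans pSpan_le (map₂_le (f := LinearMap.mul K R)).symm

theorem bSpan_eq_map₂ (S T : Submodule K R) : bSpan K S T = map₂ (commutatorBilin K R) S T :=
  eq_of_forall_ge_iff fun _ ↦ Iff.trans bSpan_le (map₂_le (f := commutatorBilin K R)).symm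

theorem pSpan_iSup_left {ι : Sort*} (S : ι → Submodule K R) (T : Submodule K R) :
    pSpan K (⨆ i, S i) T = ⨆ i, pSpan K (S i) T := by
  simp only [pSpan_eq_map₂, map₂_iSup_left]

theorem pSpan_iSup_right {ι : Sort*} (S : Submodule K R) (T : ι → Submodule K R) :
    pSpan K S (⨆ i, T i) = ⨆ i, pSpan K S (T i) := by
  simp only [pSpan_eq_map₂, map₂_iSup_right]

theorem bSpan_iSup_left {ι : Sort*} (S : ι → Submodule K R) (T : Submodule K R) :
    bSpan K (⨆ i, S i) T = ⨆ i, bSpan K (S i) T := by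
  simp only [bSpan_eq_map₂, map₂_iSup_left]

theorem bSpan_iSup_right {ι : Sort*} (S : Submodule K R) (T : ι → Submodule K R) :
    bSpan K S (⨆ i, T i) = ⨆ i, bSpan K S (T i) := by
  simp only [bSpan_eq_map₂, map₂_iSup_right]

theorem pSpan_pSpan_le {S T P Q : Submodule K R} :
    pSpan K (pSpan K S T) P ≤ Q ↔ ∀ a ∈ S, ∀ b ∈ T, ∀ c ∈ P, a * b * c ∈ Q := by
  rw [pSpan_eq_map₂, pSpan_eq_map₂]
  exact map₂_map₂_le

theorem bSpan_pSpan_le {S T P Q : Submodule K R} :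
    bSpan K (pSpan K S T) P ≤ Q ↔
      ∀ a ∈ S, ∀ b ∈ T, ∀ c ∈ P, a * b * c - c * (a * b) ∈ Q := by
  rw [bSpan_eq_map₂, pSpan_eq_map₂]
  exact map₂_map₂_le

theorem bSpan_bSpan_le {S T P Q : Submodule K R} :
    bSpan K (bSpan K S T) P ≤ Q ↔
      ∀ a ∈ S, ∀ b ∈ T, ∀ c ∈ P, (a * b - b * a) * c - c * (a * b - b * a) ∈ Q := by
  rw [bSpan_eq_map₂, bSpan_eq_map₂]
  exact map₂_map₂_le

theorem pSpan_assoc_le (S T P : Submodule K R) :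
    pSpan K (pSpan K S T) P ≤ pSpan K S (pSpan K T P) :=
  pSpan_pSpan_le.2 fun a ha b hb c hc ↦ by
    rw [mul_assoc]
    exact mul_mem_pSpan ha (mul_mem_pSpan hb hc)

theorem bSpan_pSpan_le_cyclic (S T P : Submodule K R) :
    bSpan K (pSpan K S T) P ≤ bSpan K S (pSpan K T P) ⊔ bSpan K T (pSpan K P S) :=
  bSpan_pSpan_le.2 fun a ha b hb c hc ↦ by
    have cyclic : a * b * c - c * (a * b) =
        (a * (b * c) - b * c * a) + (b * (c * a) - c * a * b) := by
      simp only [mul_assoc]; abel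
    rw [cyclic]
    exact add_mem_sup (commutator_mem_bSpan ha (mul_mem_pSpan hb hc))
      (commutator_mem_bSpan hb (mul_mem_pSpan hc ha))

theorem bSpan_pSpan_le_leibniz (S T P : Submodule K R) :
    bSpan K (pSpan K S T) P ≤ pSpan K (bSpan K S P) T ⊔ pSpan K S (bSpan K T P) :=
  bSpan_pSpan_le.2 fun a ha b hb c hc ↦ by
    have leibniz : a * b * c - c * (a * b) = (a * c - c * a) * b + a * (b * c - c * b) := by
      simp only [mul_sub, sub_mul, mul_assoc]; abel
    rw [leibniz]
    exact add_mem_sup (mul_mem_pSpan (commutator_mem_bSpan ha hc) hb)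
      (mul_mem_pSpan ha (commutator_mem_bSpan hb hc))

theorem bSpan_bSpan_le_jacobi (S T P : Submodule K R) :
    bSpan K (bSpan K S T) P ≤ bSpan K S (bSpan K T P) ⊔ bSpan K T (bSpan K P S) :=
  bSpan_bSpan_le.2 fun a ha b hb c hc ↦ by
    have jacobi : (a * b - b * a) * c - c * (a * b - b * a) =
        (a * (b * c - c * b) - (b * c - c * b) * a) +
          (b * (c * a - a * c) - (c * a - a * c) * b) := by
      simp only [mul_sub, sub_mul, mul_assoc]; abel
    rw [jacobi]
    exact add_mem_sup (commutator_mem_bSpan ha (commutator_mem_bSpan hb hc))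
      (commutator_mem_bSpan hb (commutator_mem_bSpan hc ha))

end SpanCalculus

section CommutatorIdeals

variable {K} {R : Type*} [NonUnitalRing R] [Module K R]

theorem IklS_add_two (S : Submodule K R) (ℓ k : ℕ) :
    IklS K S (ℓ + 2) k =
      ⨆ i : Finset.range (k + 1), pSpan K (cSp K S i) (IklS K S (ℓ + 1) (k - i)) := by
  rw [IklS, sum_submodule_eq_iSup]

theorem IklS_le_Ik (ℓ k : ℕ) : IklS K (⊤ : Submodule K R) (ℓ + 1) k ≤ Ik K R k :=
  le_iSup (fun ℓ ↦ IklS K ⊤ (ℓ + 1) k) ℓ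

theorem cSp_le_Ik (k : ℕ) : cSp K (⊤ : Submodule K R) k ≤ Ik K R k := by
  simpa only [IklS] using IklS_le_Ik (K := K) (R := R) 0 k

theorem Ik_zero : Ik K R 0 = ⊤ :=
  top_le_iff.1 (cSp_le_Ik 0)

theorem Ik_induction {motive : ℕ → Submodule K R → Prop}
    (hiSup : ∀ (k : ℕ) (ι : Type) (S : ι → Submodule K R),
      (∀ i, motive k (S i)) → motive k (⨆ i, S i))
    (hcSp : ∀ k, motive k (cSp K ⊤ k))
    (hpSpan : ∀ (i j : ℕ) (S : Submodule K R), S ≤ Ik K R j → motive j S →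
      motive (i + j) (pSpan K (cSp K ⊤ i) S)) (k : ℕ) :
    motive k (Ik K R k) := by
  refine hiSup k ℕ _ fun ℓ ↦ ?_
  induction ℓ generalizing k with
  | zero => simpa only [IklS] using hcSp k
  | succ ℓ ih =>
    rw [IklS_add_two]
    refine hiSup k _ _ fun i ↦ ?_
    have hik : (i : ℕ) + (k - i) = k := Nat.add_sub_of_le (Finset.mem_range_succ_iff.1 i.2)
    simpa only [hik] using hpSpan i (k - i) _ (IklS_le_Ik ℓ _) (ih _)

variable [SMulCommClass K R R] [IsScalarTower K R R]

theorem pSpan_cSp_Ik_le (i j : ℕ) : pSpan K (cSp K ⊤ i) (Ik K R j) ≤ Ik K R (i + j) := by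
  rw [Ik, pSpan_iSup_right]
  refine iSup_le fun ℓ ↦ le_trans ?_ (IklS_le_Ik (ℓ + 1) (i + j))
  rw [IklS_add_two]
  refine le_iSup_of_le ⟨i, Finset.mem_range_succ_iff.2 (Nat.le_add_right i j)⟩ ?_
  rw [Nat.add_sub_cancel_left]

theorem pSpan_Ik_Ik_le (i j : ℕ) : pSpan K (Ik K R i) (Ik K R j) ≤ Ik K R (i + j) := by
  refine Ik_induction (motive := fun i S ↦ pSpan K S (Ik K R j) ≤ Ik K R (i + j)) ?_ ?_ ?_ i
  · intro i ι S hS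
    rw [pSpan_iSup_left]
    exact iSup_le hS
  · exact fun i ↦ pSpan_cSp_Ik_le i j
  · intro i l S _ hS
    calc pSpan K (pSpan K (cSp K ⊤ i) S) (Ik K R j)
        ≤ pSpan K (cSp K ⊤ i) (pSpan K S (Ik K R j)) := pSpan_assoc_le _ _ _
      _ ≤ pSpan K (cSp K ⊤ i) (Ik K R (l + j)) := pSpan_mono le_rfl hS
      _ ≤ Ik K R (i + (l + j)) := pSpan_cSp_Ik_le _ _
      _ = Ik K R (i + l + j) := by rw [add_assoc]

theorem bSpan_top_Ik_le (k : ℕ) : bSpan K ⊤ (Ik K R k) ≤ Ik K R (k + 1) := by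
  rw [bSpan_comm]
  refine Ik_induction (motive := fun k S ↦ bSpan K S ⊤ ≤ Ik K R (k + 1)) ?_ ?_ ?_ k
  · intro k ι S hS
    rw [bSpan_iSup_left]
    exact iSup_le hS
  · intro k
    rw [bSpan_comm]
    exact cSp_le_Ik (k + 1)
  · intro i j S hSj hS
    refine (bSpan_pSpan_le_leibniz _ _ _).trans (sup_le ?_ ?_)
    · calc pSpan K (bSpan K (cSp K ⊤ i) ⊤) S
          ≤ pSpan K (cSp K ⊤ (i + 1)) (Ik K R j) := pSpan_mono (bSpan_comm _ _).le hSj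
        _ ≤ Ik K R (i + 1 + j) := pSpan_cSp_Ik_le _ _
        _ = Ik K R (i + j + 1) := by rw [add_right_comm]
    · exact (pSpan_mono le_rfl hS).trans (pSpan_cSp_Ik_le i (j + 1))

theorem bSpan_cSp_Ik_le (k n : ℕ) :
    bSpan K (cSp K ⊤ k) (Ik K R n) ≤ bSpan K ⊤ (Ik K R (k + n)) := by
  induction k generalizing n with
  | zero => rw [zero_add, cSp]
  | succ k ih =>
    refine (bSpan_bSpan_le_jacobi _ _ _).trans (sup_le ?_ ?_)
    · calc bSpan K ⊤ (bSpan K (cSp K ⊤ k) (Ik K R n))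
          ≤ bSpan K ⊤ (bSpan K ⊤ (Ik K R (k + n))) := bSpan_mono le_rfl (ih n)
        _ ≤ bSpan K ⊤ (Ik K R (k + n + 1)) := bSpan_mono le_rfl (bSpan_top_Ik_le _)
        _ = bSpan K ⊤ (Ik K R (k + 1 + n)) := by rw [add_right_comm]
    · calc bSpan K (cSp K ⊤ k) (bSpan K (Ik K R n) ⊤)
          ≤ bSpan K (cSp K ⊤ k) (Ik K R (n + 1)) :=
            bSpan_mono le_rfl ((bSpan_comm _ _).trans_le (bSpan_top_Ik_le n))
        _ ≤ bSpan K ⊤ (Ik K R (k + (n + 1))) := ih (n + 1)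
        _ = bSpan K ⊤ (Ik K R (k + 1 + n)) := by rw [add_assoc, add_comm 1 n]

theorem bSpan_Ik_Ik_le (k n : ℕ) :
    bSpan K (Ik K R k) (Ik K R n) ≤ bSpan K ⊤ (Ik K R (k + n)) := by
  refine Ik_induction (motive := fun k S ↦
    ∀ n, bSpan K S (Ik K R n) ≤ bSpan K ⊤ (Ik K R (k + n))) ?_ ?_ ?_ k n
  · intro k ι S hS n
    rw [bSpan_iSup_left]
    exact iSup_le fun i ↦ hS i n
  · exact bSpan_cSp_Ik_le
  · intro i j S hSj hS n
    refine (bSpan_pSpan_le_cyclic _ _ _).trans (sup_le ?_ ?_)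
    · calc bSpan K (cSp K ⊤ i) (pSpan K S (Ik K R n))
          ≤ bSpan K (cSp K ⊤ i) (Ik K R (j + n)) :=
            bSpan_mono le_rfl ((pSpan_mono hSj le_rfl).trans (pSpan_Ik_Ik_le j n))
        _ ≤ bSpan K ⊤ (Ik K R (i + (j + n))) := bSpan_cSp_Ik_le _ _
        _ = bSpan K ⊤ (Ik K R (i + j + n)) := by rw [add_assoc]
    · calc bSpan K S (pSpan K (Ik K R n) (cSp K ⊤ i))
          ≤ bSpan K S (Ik K R (n + i)) :=
            bSpan_mono le_rfl ((pSpan_mono le_rfl (cSp_le_Ik i)).trans (pSpan_Ik_Ik_le n i))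
        _ ≤ bSpan K ⊤ (Ik K R (j + (n + i))) := hS (n + i)
        _ = bSpan K ⊤ (Ik K R (i + j + n)) := by congr 2; omega

end CommutatorIdeals

section Powers

variable {K} {R : Type*} [NonUnitalRing R] [Module K R] [SMulCommClass K R R]
  [IsScalarTower K R R]

theorem pSpan_gPow_gPow_le (g : Submodule K R) (m n : ℕ) :
    pSpan K (gPow K g (m + 1)) (gPow K g (n + 1)) ≤ gPow K g (m + n + 2) := by
  induction m with
  | zero => rw [zero_add, zero_add, gPow, gPow]
  | succ m ih =>
    calc pSpan K (pSpan K g (gPow K g (m + 1))) (gPow K g (n + 1))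
        ≤ pSpan K g (pSpan K (gPow K g (m + 1)) (gPow K g (n + 1))) := pSpan_assoc_le _ _ _
      _ ≤ pSpan K g (gPow K g (m + n + 2)) := pSpan_mono le_rfl ih
      _ = gPow K g (m + 1 + n + 2) := by rw [add_right_comm m 1 n]; rfl

theorem bSpan_gPow_gPow_le (g : Submodule K R) (m n : ℕ) :
    bSpan K (gPow K g (m + 1)) (gPow K g (n + 1)) ≤ bSpan K g (gPow K g (m + n + 1)) := by
  induction m generalizing n with
  | zero => rw [zero_add, zero_add, gPow]
  | succ m ih =>
    refine (bSpan_pSpan_le_cyclic _ _ _).trans (sup_le ?_ ?_)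
    · calc bSpan K g (pSpan K (gPow K g (m + 1)) (gPow K g (n + 1)))
          ≤ bSpan K g (gPow K g (m + n + 2)) := bSpan_mono le_rfl (pSpan_gPow_gPow_le g m n)
        _ = bSpan K g (gPow K g (m + 1 + n + 1)) := by rw [add_right_comm m 1 n]
    · calc bSpan K (gPow K g (m + 1)) (pSpan K (gPow K g (n + 1)) g)
          ≤ bSpan K (gPow K g (m + 1)) (gPow K g (n + 1 + 1)) :=
            bSpan_mono le_rfl (pSpan_gPow_gPow_le g n 0)
        _ ≤ bSpan K g (gPow K g (m + (n + 1) + 1)) := ih (n + 1)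
        _ = bSpan K g (gPow K g (m + 1 + n + 1)) := by rw [add_assoc m 1 n, add_comm 1 n]

theorem bSpan_gPow_le {g : Submodule K R} (hg : bSpan K g g ≤ g) (n : ℕ) :
    bSpan K g (gPow K g n) ≤ gPow K g n := by
  rw [bSpan_comm]
  induction n using gPow.induct with
  | case1 => exact bSpan_le.2 (by simp [gPow])
  | case2 => exact hg
  | case3 n ih =>
    exact (bSpan_pSpan_le_leibniz _ _ _).trans
      (sup_le (pSpan_mono hg le_rfl) (pSpan_mono le_rfl ih))

end Powers

section CurrentAlgebra

variable {K}

section Module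

variable {F A : Type*} [AddCommGroup F] [Module K F] [AddCommGroup A] [Module K A]

theorem tmul_mem_tSpan {S : Submodule K F} {T : Submodule K A} {f : F} {a : A}
    (hf : f ∈ S) (ha : a ∈ T) : f ⊗ₜ[K] a ∈ tSpan K S T :=
  subset_span ⟨f, hf, a, ha, rfl⟩

theorem tSpan_mono {S S' : Submodule K F} {T T' : Submodule K A} (hS : S ≤ S') (hT : T ≤ T') :
    tSpan K S T ≤ tSpan K S' T' :=
  span_le.2 fun _ ⟨_, hf, _, ha, hz⟩ ↦ hz ▸ tmul_mem_tSpan (hS hf) (hT ha)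

end Module

variable {F A : Type*} [NonUnitalRing F] [Module K F] [NonUnitalRing A] [Module K A]

variable (F) in
/-- The upper bound `tilde(g,A)(F)` of the current Lie algebra `(g,A)(F)`. The index `k` is the
paper's `k` lowered by one, so that it runs through all natural numbers. -/
def currentLieUpperBound (g : Submodule K A) : Submodule K (F ⊗[K] A) :=
  tSpan K ⊤ g ⊔ ⨆ k : ℕ, (tSpan K (Ik K F (k + 1)) (bSpan K g (gPow K g (k + 2))) ⊔
    tSpan K (bSpan K ⊤ (Ik K F k)) (gPow K g (k + 2)))

variable (F) in
/-- The space `Σ_{k ≥ 0} I_k(F) ⊗ g^{k+1}`, which contains the upper bound and whose commutators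
lie in the upper bound. -/
def currentHull (g : Submodule K A) : Submodule K (F ⊗[K] A) :=
  ⨆ k : ℕ, tSpan K (Ik K F k) (gPow K g (k + 1))

theorem tSpan_Ik_gPow_le_currentHull (g : Submodule K A) (k : ℕ) :
    tSpan K (Ik K F k) (gPow K g (k + 1)) ≤ currentHull F g :=
  le_iSup (fun k ↦ tSpan K (Ik K F k) (gPow K g (k + 1))) k

theorem tSpan_bSpan_top_Ik_le_currentLieUpperBound (g : Submodule K A) (k : ℕ) :
    tSpan K (bSpan K ⊤ (Ik K F k)) (gPow K g (k + 2)) ≤ currentLieUpperBound F g :=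
  le_sup_of_le_right (le_iSup_of_le k le_sup_right)

theorem tSpan_Ik_bSpan_le_currentLieUpperBound {g : Submodule K A} (hg : bSpan K g g ≤ g)
    (k : ℕ) :
    tSpan K (Ik K F k) (bSpan K g (gPow K g (k + 1))) ≤ currentLieUpperBound F g := by
  cases k with
  | zero => exact le_sup_of_le_left (tSpan_mono le_top hg)
  | succ k => exact le_sup_of_le_right (le_iSup_of_le k le_sup_left)

variable [SMulCommClass K F F] [IsScalarTower K F F] [SMulCommClass K A A] [IsScalarTower K A A]

theorem bSpan_tSpan_tSpan_le (S S' : Submodule K F) (T T' : Submodule K A) :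
    bSpan K (tSpan K S T) (tSpan K S' T') ≤
      tSpan K (bSpan K S S') (pSpan K T T') ⊔ tSpan K (pSpan K S' S) (bSpan K T T') := by
  rw [bSpan_eq_map₂, tSpan, tSpan, map₂_span_span, span_le]
  rintro _ ⟨_, ⟨f, hf, a, ha, rfl⟩, _, ⟨f', hf', a', ha', rfl⟩, rfl⟩
  have commutator_tmul : commutatorBilin K (F ⊗[K] A) (f ⊗ₜ a) (f' ⊗ₜ a') =
      (f * f' - f' * f) ⊗ₜ (a * a') + (f' * f) ⊗ₜ (a * a' - a' * a) := by
    simp only [commutatorBilin, LinearMap.sub_apply, LinearMap.flip_apply, LinearMap.mul_apply',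
      Algebra.TensorProduct.tmul_mul_tmul, sub_tmul, tmul_sub]
    abel
  beta_reduce
  rw [commutator_tmul]
  exact add_mem_sup (tmul_mem_tSpan (commutator_mem_bSpan hf hf') (mul_mem_pSpan ha ha'))
    (tmul_mem_tSpan (mul_mem_pSpan hf' hf) (commutator_mem_bSpan ha ha'))

theorem currentLieUpperBound_le_currentHull {g : Submodule K A} (hg : bSpan K g g ≤ g) :
    currentLieUpperBound F g ≤ currentHull F g := by
  refine sup_le ?_ (iSup_le fun k ↦ sup_le ?_ ?_)
  · simpa only [Ik_zero, gPow] using tSpan_Ik_gPow_le_currentHull (F := F) g 0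
  · exact (tSpan_mono le_rfl (bSpan_gPow_le hg _)).trans (tSpan_Ik_gPow_le_currentHull g (k + 1))
  · exact (tSpan_mono (bSpan_top_Ik_le k) le_rfl).trans (tSpan_Ik_gPow_le_currentHull g (k + 1))

theorem bSpan_currentHull_le {g : Submodule K A} (hg : bSpan K g g ≤ g) :
    bSpan K (currentHull F g) (currentHull F g) ≤ currentLieUpperBound F g := by
  simp only [currentHull, bSpan_iSup_left, bSpan_iSup_right]
  refine iSup_le fun j ↦ iSup_le fun i ↦ (bSpan_tSpan_tSpan_le _ _ _ _).trans (sup_le ?_ ?_)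
  · exact (tSpan_mono (bSpan_Ik_Ik_le _ _) (pSpan_gPow_gPow_le g _ _)).trans
      (tSpan_bSpan_top_Ik_le_currentLieUpperBound g _)
  · have pSpan_swap_le : pSpan K (Ik K F j) (Ik K F i) ≤ Ik K F (i + j) :=
      (pSpan_Ik_Ik_le j i).trans_eq (by rw [add_comm])
    exact (tSpan_mono pSpan_swap_le (bSpan_gPow_gPow_le g i j)).trans
      (tSpan_Ik_bSpan_le_currentLieUpperBound hg _)

end CurrentAlgebra

theorem statement9_general {K : Type*} [Field K]
    {F : Type*} [NonUnitalRing F] [Module K F] [SMulCommClass K F F] [IsScalarTower K F F]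
    {A : Type*} [NonUnitalRing A] [Module K A] [SMulCommClass K A A] [IsScalarTower K A A]
    (g : Submodule K A) (hg : ∀ x ∈ g, ∀ y ∈ g, x * y - y * x ∈ g) :
    ∀ x ∈ currentLieUpperBound F g, ∀ y ∈ currentLieUpperBound F g,
      x * y - y * x ∈ currentLieUpperBound F g := by
  have hgg : bSpan K g g ≤ g := bSpan_le.2 hg
  have le_hull := currentLieUpperBound_le_currentHull (F := F) hgg
  exact bSpan_le.1 ((bSpan_mono le_hull le_hull).trans (bSpan_currentHull_le hgg))

/-- the upper bound
`tilde(g,A)(F) = F ⊗ g + Σ_{k ≥ 1} ( I_k(F) ⊗ [g, g^{k+1}] + [F, I_{k-1}(F)] ⊗ g^{k+1} )`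
is a Lie subalgebra of `F ⊗ A` (i.e. is closed under the commutator bracket). -/
theorem statement9 {K : Type*} [Field K] [CharZero K]
    {F : Type*} [NonUnitalRing F] [Module K F] [SMulCommClass K F F] [IsScalarTower K F F]
    {A : Type*} [Ring A] [Algebra K A]
    (g : Submodule K A) (hg : ∀ x ∈ g, ∀ y ∈ g, x * y - y * x ∈ g) :
    ∀ x ∈ tSpan K (⊤ : Submodule K F) g ⊔
        ⨆ k : ℕ, (tSpan K (Ik K F (k + 1)) (bSpan K g (gPow K g (k + 2))) ⊔
          tSpan K (bSpan K (⊤ : Submodule K F) (Ik K F k)) (gPow K g (k + 2))),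
      ∀ y ∈ tSpan K (⊤ : Submodule K F) g ⊔
        ⨆ k : ℕ, (tSpan K (Ik K F (k + 1)) (bSpan K g (gPow K g (k + 2))) ⊔
          tSpan K (bSpan K (⊤ : Submodule K F) (Ik K F k)) (gPow K g (k + 2))),
        x * y - y * x ∈ tSpan K (⊤ : Submodule K F) g ⊔
          ⨆ k : ℕ, (tSpan K (Ik K F (k + 1)) (bSpan K g (gPow K g (k + 2))) ⊔
            tSpan K (bSpan K (⊤ : Submodule K F) (Ik K F k)) (gPow K g (k + 2))) :=
  statement9_general g hg
end

section
/- Let k be a field of characteristic 0, n ≥ 2, A = M_n(k), and let Φ₀ be the bilinear form on k^n given by Φ₀(x,y) = x₁y_n + x₂y_{n−1} + ⋯ + x_n y₁; alternatively, for n = 2m let Φ₁ be the form Φ₁(x,y) = x₁y_{2m} + ⋯ + x_m y_{m+1} − x_{m+1}y_m − ⋯ − x_{2m}y₁. Let g = o(Φ) ⊆ A be the orthogonal Lie algebra of Φ = Φ₀ or Φ = Φ₁, i.e. o(Φ) = {M ∈ M_n(k) : Φ(Mu,v) + Φ(u,Mv) = 0 for all u,v}. Let F be a unital associative k-algebra.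 Then an invertible diagonal matrix D = diag(f₁,…,f_n) ∈ GL_n(F) (with each f_i ∈ F invertible) satisfies D·(g,A)(F)·D^{−1} = (g,A)(F) if and only if f_i f_{n−i+1} − f₁ f_n ∈ I₁(F) = F·[F,F] for i = 1,…,n. -/
open Submodule TensorProduct

variable (K : Type*) [Field K]

/-- The current Lie algebra `(g, M_n(k))(F)` realized inside `M_n(F)`:
the Lie subalgebra of `M_n(F)` generated by the subspace `F ⊗ g`,
i.e. by all matrices `u • M` with `u ∈ F` and `M ∈ g ⊆ M_n(k)`. -/
def matCurrent (K : Type*) [Field K] {n : ℕ} (Fa : Type*) [Ring Fa] [Algebra K Fa]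
    (g : Submodule K (Matrix (Fin n) (Fin n) K)) :
    Submodule K (Matrix (Fin n) (Fin n) Fa) :=
  lieGen K (Submodule.span K
    {X : Matrix (Fin n) (Fin n) Fa | ∃ u : Fa, ∃ M ∈ g, X = u • M.map (algebraMap K Fa)})

/-!
Let `†` be the adjoint with respect to `Φ`, extended entrywise to `M_n(F)`. The Lie algebra
`L = (g, A)(F)` is generated by the `Y` with `Y† = -Y`. Since `†` is an anti-automorphism of
`M_n(C)` as soon as `C` is commutative, reducing modulo `I₁ = F[F, F]` shows that the entries of
`X + X†` lie in `I₁` for every `X ∈ L`. Conversely, brackets of the elements `X - X†` produce in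
`L` all matrices with vanishing antidiagonal, diagonal entries in `[F, F]` and the other entries
in `I₁`.

Let `X = D Y D⁻¹` with `Y† = -Y`. The `(i, j)` entry of `X + X†` is
`f_i Y_ij f_j⁻¹ - f_j' Y_ij f_i'⁻¹`, where `i' = n - i + 1`. If it lies in `I₁` for some `Y ∈ g`
with `Y_ij = 1`, then `f_i f_i' ≡ f_j f_j'` modulo `I₁`. If these congruences hold, then `X + X†`
is one of the matrices above, and `2 X = (X - X†) + (X + X†)` lies in `L`.
-/

section LieGen

variable {K}
variable {R R' : Type*}

section NonUnital

variable [NonUnitalRing R] [Module K R] {S T : Submodule K R}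

theorem le_lieGen : S ≤ lieGen K S :=
  le_sInf fun _ hT => hT.1

theorem lieGen_le (hST : S ≤ T) (hT : ∀ x ∈ T, ∀ y ∈ T, x * y - y * x ∈ T) : lieGen K S ≤ T :=
  sInf_le ⟨hST, hT⟩

theorem mul_sub_mul_mem_lieGen {x y : R} (hx : x ∈ lieGen K S) (hy : y ∈ lieGen K S) :
    x * y - y * x ∈ lieGen K S := by
  simp only [lieGen, mem_sInf] at *
  exact fun T hT => hT.2 x (hx T hT) y (hy T hT)

theorem mul_sub_mul_mem_bSpan_top (a b : R) : a * b - b * a ∈ bSpan K (⊤ : Submodule K R) ⊤ :=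
  subset_span ⟨a, mem_top, b, mem_top, rfl⟩

end NonUnital

theorem lieGen_le_comap [Ring R] [Algebra K R] [Ring R'] [Algebra K R'] {S : Submodule K R}
    {T : Submodule K R'} (φ : R →ₐ[K] R') (hST : S ≤ T.comap φ.toLinearMap)
    (hT : ∀ x ∈ T, ∀ y ∈ T, x * y - y * x ∈ T) : lieGen K S ≤ T.comap φ.toLinearMap := by
  refine lieGen_le hST fun x hx y hy => ?_
  simpa using hT (φ x) hx (φ y) hy

end LieGen

section CommutatorIdeal

variable (F : Type*) [Ring F] [Algebra K F]

/-- The ideal `I₁(F) = F·[F, F]`. Its underlying set is literally that of the subspace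
`pSpan K ⊤ (bSpan K ⊤ ⊤)`. -/
def commutatorIdeal : Ideal F where
  carrier := pSpan K (⊤ : Submodule K F) (bSpan K ⊤ ⊤)
  add_mem' := add_mem
  zero_mem' := zero_mem _
  smul_mem' a x hx := by
    suffices h : pSpan K (⊤ : Submodule K F) (bSpan K ⊤ ⊤) ≤
        (pSpan K ⊤ (bSpan K ⊤ ⊤)).comap (LinearMap.mulLeft K a) from h hx
    refine span_le.2 ?_
    rintro _ ⟨b, -, c, hc, rfl⟩
    exact subset_span ⟨a * b, mem_top, c, hc, (mul_assoc a b c).symm⟩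

variable {F}

theorem mem_commutatorIdeal_of_mem_bSpan {x : F} (hx : x ∈ bSpan K (⊤ : Submodule K F) ⊤) :
    x ∈ commutatorIdeal K F :=
  subset_span ⟨1, mem_top, x, hx, (one_mul x).symm⟩

theorem mul_sub_mul_mem_commutatorIdeal (a b : F) : a * b - b * a ∈ commutatorIdeal K F :=
  mem_commutatorIdeal_of_mem_bSpan K (mul_sub_mul_mem_bSpan_top a b)

instance commutatorIdeal_isTwoSided : (commutatorIdeal K F).IsTwoSided where
  mul_mem_of_left {a} b ha := by
    have hab := add_mem (mul_sub_mul_mem_commutatorIdeal K a b)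
      ((commutatorIdeal K F).mul_mem_left b ha)
    rwa [sub_add_cancel] at hab

instance commutatorIdeal_quotientCommRing : CommRing (F ⧸ commutatorIdeal K F) where
  __ := (inferInstance : Ring (F ⧸ commutatorIdeal K F))
  mul_comm x y := by
    obtain ⟨a, rfl⟩ := Ideal.Quotient.mk_surjective x
    obtain ⟨b, rfl⟩ := Ideal.Quotient.mk_surjective y
    exact Ideal.Quotient.eq.2 (mul_sub_mul_mem_commutatorIdeal K a b)

/-- The class of a unit of `F` in the commutative quotient `F ⧸ I₁(F)`. -/
def unitClass : Fˣ →* (F ⧸ commutatorIdeal K F)ˣ :=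
  Units.map (Ideal.Quotient.mk (commutatorIdeal K F))

theorem mul_sub_mul_mem_commutatorIdeal_iff (a b c d : Fˣ) :
    (a * b - c * d : F) ∈ commutatorIdeal K F ↔
      unitClass K a * unitClass K b = unitClass K c * unitClass K d := by
  rw [← Ideal.Quotient.eq, Units.ext_iff]
  simp [unitClass]

theorem mul_inv_sub_mul_inv_mem_commutatorIdeal_iff (a b c d : Fˣ) :
    (a * ↑b⁻¹ - c * ↑d⁻¹ : F) ∈ commutatorIdeal K F ↔
      unitClass K a * unitClass K d = unitClass K c * unitClass K b := by
  rw [mul_sub_mul_mem_commutatorIdeal_iff, map_inv, map_inv, ← div_eq_mul_inv, ← div_eq_mul_inv,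
    div_eq_div_iff_mul_eq_mul]

theorem mul_mul_sub_mul_mul_mem_commutatorIdeal {a b c d : F}
    (h : a * b - c * d ∈ commutatorIdeal K F) (y : F) :
    a * y * b - c * y * d ∈ commutatorIdeal K F := by
  rw [← Ideal.Quotient.eq] at h ⊢
  simp only [map_mul] at h ⊢
  linear_combination Ideal.Quotient.mk (commutatorIdeal K F) y * h

theorem conj_sub_conj_mem_bSpan (a b : Fˣ) (y : F) :
    a * y * ↑a⁻¹ - b * y * ↑b⁻¹ ∈ bSpan K (⊤ : Submodule K F) ⊤ := by
  have conj_sub_self (t : Fˣ) : t * y * ↑t⁻¹ - y ∈ bSpan K (⊤ : Submodule K F) ⊤ := by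
    simpa [← mul_assoc] using mul_sub_mul_mem_bSpan_top (K := K) (t * y : F) ↑t⁻¹
  simpa using sub_mem (conj_sub_self a) (conj_sub_self b)

end CommutatorIdeal

section DiagonalConj

variable {ι F : Type*} [Fintype ι] [DecidableEq ι] [Ring F] [Algebra K F]

/-- Conjugation by the invertible diagonal matrix `diag(d)`. -/
def diagonalConj (d : ι → Fˣ) : Matrix ι ι F ≃ₐ[K] Matrix ι ι F :=
  MulSemiringAction.toAlgEquiv K _ (ConjAct.toConjAct
    (Units.map (Matrix.diagonalRingHom ι F).toMonoidHom (MulEquiv.piUnits.symm d)))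

theorem diagonalConj_eq_mul (d : ι → Fˣ) (X : Matrix ι ι F) :
    diagonalConj K d X =
      Matrix.diagonal (fun i => (d i : F)) * X * Matrix.diagonal fun i => (↑(d i)⁻¹ : F) :=
  rfl

@[simp]
theorem diagonalConj_apply (d : ι → Fˣ) (X : Matrix ι ι F) (i j : ι) :
    diagonalConj K d X i j = d i * X i j * ↑(d j)⁻¹ := by
  simp [diagonalConj_eq_mul]

theorem diagonalConj_inv_diagonalConj (d : ι → Fˣ) (X : Matrix ι ι F) :
    diagonalConj K d⁻¹ (diagonalConj K d X) = X := by
  ext i j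
  simp [mul_assoc]

theorem image_diagonalConj_eq_iff (d : ι → Fˣ) (L : Submodule K (Matrix ι ι F)) :
    diagonalConj K d '' L = L ↔
      (∀ X ∈ L, diagonalConj K d X ∈ L) ∧ ∀ X ∈ L, diagonalConj K d⁻¹ X ∈ L := by
  constructor
  · refine fun h => ⟨fun X hX => h.subset ⟨X, hX, rfl⟩, fun X hX => ?_⟩
    obtain ⟨Y, hY, rfl⟩ := h.superset hX
    rwa [diagonalConj_inv_diagonalConj]
  · rintro ⟨hconj, hinv⟩
    refine (Set.image_subset_iff.2 hconj).antisymm fun X hX => ⟨_, hinv X hX, ?_⟩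
    simpa using diagonalConj_inv_diagonalConj K d⁻¹ X

end DiagonalConj

section RevForm

variable {K}
variable {n : ℕ}

/-- The antidiagonal bilinear form `∑ ε_i x_i y_{n-i+1}` on `Kⁿ`; `Φ₀` and `Φ₁` are the cases
where the `ε_i` are suitable signs. -/
def revForm (ε x y : Fin n → K) : K :=
  ∑ i, ε i * (x i * y i.rev)

/-- The conditions on the weights `ε` under which `revForm ε` is nondegenerate and agrees with its
transpose up to a scalar. -/
structure IsReflexiveWeight (ε : Fin n → K) : Prop where
  ne_zero : ∀ i, ε i ≠ 0
  mul_rev : ∀ i j, ε i * ε j.rev = ε j * ε i.rev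

theorem isReflexiveWeight_one : IsReflexiveWeight (1 : Fin n → K) :=
  ⟨fun _ => one_ne_zero, fun _ _ => rfl⟩

theorem isReflexiveWeight_symplectic (hn : n % 2 = 0) :
    IsReflexiveWeight fun i : Fin n => if (i : ℕ) < n / 2 then (1 : K) else -1 where
  ne_zero i := by split_ifs <;> simp
  mul_rev i j := by
    have rev_lt_half (k : Fin n) : (k.rev : ℕ) < n / 2 ↔ ¬ (k : ℕ) < n / 2 := by
      rw [Fin.val_rev]
      omega
    simp only [rev_lt_half]
    split_ifs <;> simp

section Adjoint

variable {R R' : Type*} [AddCommGroup R] [Module K R] [AddCommGroup R'] [Module K R']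

/-- The adjoint `X†` of a matrix with respect to `revForm ε`. The entries may lie in any vector
space: it is the extension of the adjoint on `M_n(K)` to `R ⊗ M_n(K) = M_n(R)`. -/
def formAdjoint (ε : Fin n → K) : Matrix (Fin n) (Fin n) R →ₗ[K] Matrix (Fin n) (Fin n) R where
  toFun X := Matrix.of fun i j => (ε j / ε i) • X j.rev i.rev
  map_add' X Y := by ext; simp
  map_smul' c X := by ext; simp [smul_comm c]

@[simp]
theorem formAdjoint_apply (ε : Fin n → K) (X : Matrix (Fin n) (Fin n) R) (i j : Fin n) :
    formAdjoint ε X i j = (ε j / ε i) • X j.rev i.rev :=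
  rfl

theorem formAdjoint_map (ε : Fin n → K) (f : R →ₗ[K] R') (X : Matrix (Fin n) (Fin n) R) :
    formAdjoint ε (X.map f) = (formAdjoint ε X).map f := by
  ext
  simp

theorem formAdjoint_single (ε : Fin n → K) (i j : Fin n) (x : R) :
    formAdjoint ε (Matrix.single i j x) =
      (ε i.rev / ε j.rev) • Matrix.single j.rev i.rev x := by
  ext a b
  have hpos : (j.rev = a ∧ i.rev = b) ↔ (i = b.rev ∧ j = a.rev) := by
    rw [Fin.rev_eq_iff, Fin.rev_eq_iff, and_comm]
  simp only [formAdjoint_apply, Matrix.smul_apply, Matrix.single_apply, hpos]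
  split_ifs with h
  · rw [h.1, h.2, Fin.rev_rev, Fin.rev_rev]
  · rw [smul_zero, smul_zero]

/-- The matrices `X` with `X† = -X`. For `R = K` this is the Lie algebra `o(Φ)` of
`Φ = revForm ε`. -/
def formSkew (ε : Fin n → K) (R : Type*) [AddCommGroup R] [Module K R] :
    Submodule K (Matrix (Fin n) (Fin n) R) :=
  LinearMap.eqLocus (formAdjoint ε) (-LinearMap.id)

theorem mem_formSkew {ε : Fin n → K} {X : Matrix (Fin n) (Fin n) R} :
    X ∈ formSkew ε R ↔ formAdjoint ε X = -X :=
  Iff.rfl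

theorem map_mem_formSkew {ε : Fin n → K} (f : R →ₗ[K] R') {X : Matrix (Fin n) (Fin n) R}
    (hX : X ∈ formSkew ε R) : X.map f ∈ formSkew ε R' := by
  rw [mem_formSkew] at *
  rw [formAdjoint_map, hX]
  ext
  simp

end Adjoint

namespace IsReflexiveWeight

variable {R : Type*} {ε : Fin n → K}

theorem formAdjoint_formAdjoint (hε : IsReflexiveWeight ε) [AddCommGroup R] [Module K R]
    (X : Matrix (Fin n) (Fin n) R) :
    formAdjoint ε (formAdjoint ε X) = X := by
  ext i j
  have hweight : ε j / ε i * (ε i.rev / ε j.rev) = 1 := by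
    rw [div_mul_div_comm, hε.mul_rev j i, div_self (mul_ne_zero (hε.ne_zero i) (hε.ne_zero _))]
  simp [smul_smul, hweight]

theorem sub_formAdjoint_mem_formSkew (hε : IsReflexiveWeight ε) [AddCommGroup R] [Module K R]
    (X : Matrix (Fin n) (Fin n) R) : X - formAdjoint ε X ∈ formSkew ε R := by
  rw [mem_formSkew, map_sub, hε.formAdjoint_formAdjoint, neg_sub]

theorem formAdjoint_mul (hε : IsReflexiveWeight ε) [CommRing R] [Algebra K R]
    (X Y : Matrix (Fin n) (Fin n) R) :
    formAdjoint ε (X * Y) = formAdjoint ε Y * formAdjoint ε X := by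
  ext i j
  simp only [formAdjoint_apply, Matrix.mul_apply, Finset.smul_sum]
  rw [← Equiv.sum_comp Fin.revPerm]
  refine Finset.sum_congr rfl fun k _ => ?_
  rw [Fin.revPerm_apply, smul_mul_smul_comm, mul_comm (X _ _), mul_comm (ε k / ε i),
    div_mul_div_cancel₀ (hε.ne_zero k)]

theorem mul_sub_mul_mem_formSkew (hε : IsReflexiveWeight ε) [CommRing R] [Algebra K R]
    {X Y : Matrix (Fin n) (Fin n) R} (hX : X ∈ formSkew ε R) (hY : Y ∈ formSkew ε R) :
    X * Y - Y * X ∈ formSkew ε R := by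
  rw [mem_formSkew] at *
  rw [map_sub, hε.formAdjoint_mul, hε.formAdjoint_mul, hX, hY, neg_mul_neg, neg_mul_neg, neg_sub]

theorem revForm_mulVec_left (hε : IsReflexiveWeight ε) (M : Matrix (Fin n) (Fin n) K)
    (u v : Fin n → K) : revForm ε (M.mulVec u) v =
      revForm ε u ((formAdjoint ε M).mulVec v) := by
  simp only [revForm, Matrix.mulVec, dotProduct, Finset.sum_mul, Finset.mul_sum]
  rw [Finset.sum_comm]
  refine Finset.sum_congr rfl fun j _ => ?_
  rw [← Equiv.sum_comp Fin.revPerm]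
  refine Finset.sum_congr rfl fun i _ => ?_
  have hrev := hε.ne_zero j.rev
  have hweight := hε.mul_rev i.rev j
  rw [Fin.rev_rev] at hweight
  simp only [Fin.revPerm_apply, formAdjoint_apply, Fin.rev_rev, smul_eq_mul]
  field_simp
  linear_combination M i.rev j * u j * v i * hweight

theorem eq_zero_of_revForm_mulVec_right (hε : IsReflexiveWeight ε) {M : Matrix (Fin n) (Fin n) K}
    (hM : ∀ u v, revForm ε u (M.mulVec v) = 0) : M = 0 := by
  ext i j
  have hij := hM (Pi.single i.rev 1) (Pi.single j 1)
  rw [revForm, Finset.sum_eq_single i.rev (fun k _ hk => by simp [hk]) (by simp)] at hij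
  simpa [hε.ne_zero] using hij

theorem mem_formSkew_iff_revForm (hε : IsReflexiveWeight ε) (M : Matrix (Fin n) (Fin n) K) :
    M ∈ formSkew ε K ↔
      ∀ u v, revForm ε (M.mulVec u) v + revForm ε u (M.mulVec v) = 0 := by
  have hadd (u v : Fin n → K) : revForm ε (M.mulVec u) v + revForm ε u (M.mulVec v) =
      revForm ε u ((formAdjoint ε M + M).mulVec v) := by
    rw [hε.revForm_mulVec_left, Matrix.add_mulVec]
    simp only [revForm, Pi.add_apply, mul_add, Finset.sum_add_distrib]
  rw [mem_formSkew, eq_neg_iff_add_eq_zero]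
  simp only [hadd]
  exact ⟨fun h u v => by simp [h, revForm], hε.eq_zero_of_revForm_mulVec_right⟩

end IsReflexiveWeight

end RevForm

theorem single_sub {ι κ R : Type*} [DecidableEq ι] [DecidableEq κ] [AddCommGroup R] (i : ι)
    (j : κ) (x y : R) : Matrix.single i j (x - y) = Matrix.single i j x - Matrix.single i j y :=
  map_sub (Matrix.singleAddMonoidHom i j) x y

section Current

variable {K}
variable {n : ℕ} {F : Type*} [Ring F] [Algebra K F] {ε : Fin n → K}

theorem mul_sub_mul_mem_matCurrent {g : Submodule K (Matrix (Fin n) (Fin n) K)}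
    {X Y : Matrix (Fin n) (Fin n) F} (hX : X ∈ matCurrent K F g) (hY : Y ∈ matCurrent K F g) :
    X * Y - Y * X ∈ matCurrent K F g :=
  mul_sub_mul_mem_lieGen hX hY

theorem smul_map_algebraMap {ι κ : Type*} (u : F) (M : Matrix ι κ K) :
    u • M.map (algebraMap K F) = M.map (LinearMap.toSpanSingleton K F u) := by
  ext
  simp [Algebra.smul_def, Algebra.commutes]

theorem diagonalConj_add_formAdjoint_apply (d : Fin n → Fˣ) {Y : Matrix (Fin n) (Fin n) F}
    (hY : Y ∈ formSkew ε F) (i j : Fin n) :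
    (diagonalConj K d Y + formAdjoint ε (diagonalConj K d Y)) i j =
      d i * Y i j * ↑(d j)⁻¹ - d j.rev * Y i j * ↑(d i.rev)⁻¹ := by
  have hYij : (ε j / ε i) • Y j.rev i.rev = -Y i j := congr_fun₂ hY i j
  rw [Matrix.add_apply, formAdjoint_apply, diagonalConj_apply, diagonalConj_apply,
    ← smul_mul_assoc, ← mul_smul_comm, hYij, mul_neg, neg_mul, ← sub_eq_add_neg]

namespace IsReflexiveWeight

theorem add_formAdjoint_apply_mem_commutatorIdeal (hε : IsReflexiveWeight ε)
    {X : Matrix (Fin n) (Fin n) F} (hX : X ∈ matCurrent K F (formSkew ε K)) (i j : Fin n) :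
    (X + formAdjoint ε X) i j ∈ commutatorIdeal K F := by
  let π := Ideal.Quotient.mkₐ K (commutatorIdeal K F)
  have hle : matCurrent K F (formSkew ε K) ≤
      (formSkew ε (F ⧸ commutatorIdeal K F)).comap π.mapMatrix.toLinearMap := by
    refine lieGen_le_comap _ (span_le.2 ?_) fun _ hX _ hY => hε.mul_sub_mul_mem_formSkew hX hY
    rintro _ ⟨u, M, hM, rfl⟩
    rw [smul_map_algebraMap]
    exact map_mem_formSkew π.toLinearMap (map_mem_formSkew _ hM)
  have hskew : formAdjoint ε (X.map π) = -X.map π := hle hX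
  rw [← Ideal.Quotient.eq_zero_iff_mem, ← Ideal.Quotient.mkₐ_eq_mk K]
  have hadj : formAdjoint ε (X.map π) = (formAdjoint ε X).map π :=
    formAdjoint_map ε π.toLinearMap X
  have hij := congr_fun₂ (hadj.symm.trans hskew) i j
  rw [Matrix.map_apply, Matrix.neg_apply, Matrix.map_apply] at hij
  rw [Matrix.add_apply, map_add, hij, add_neg_cancel]

theorem sub_formAdjoint_mem_matCurrent (hε : IsReflexiveWeight ε) (X : Matrix (Fin n) (Fin n) F) :
    X - formAdjoint ε X ∈ matCurrent K F (formSkew ε K) := by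
  suffices h : X ∈ (matCurrent K F (formSkew ε K)).comap (LinearMap.id - formAdjoint ε) from h
  induction X using Matrix.induction_on' with
  | h_zero => exact zero_mem _
  | h_add X Y hX hY => exact add_mem hX hY
  | h_std_basis i j u =>
    refine le_lieGen (subset_span ⟨u, _, hε.sub_formAdjoint_mem_formSkew (.single i j 1), ?_⟩)
    have hsingle : Matrix.single i j u =
        (Matrix.single i j (1 : K)).map (LinearMap.toSpanSingleton K F u) := by
      simp [Matrix.map_single]
    rw [smul_map_algebraMap, Matrix.map_sub _ (map_sub _), ← formAdjoint_map, ← hsingle]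
    rfl

theorem single_self_mem_matCurrent (hε : IsReflexiveWeight ε) [NeZero (2 : K)] {i : Fin n}
    (hi : i ≠ i.rev) {x : F} (hx : x ∈ bSpan K (⊤ : Submodule K F) ⊤) :
    Matrix.single i i x ∈ matCurrent K F (formSkew ε K) := by
  suffices h : bSpan K (⊤ : Submodule K F) ⊤ ≤
      (matCurrent K F (formSkew ε K)).comap (Matrix.singleLinearMap K i i) from h hx
  refine span_le.2 ?_
  rintro _ ⟨u, -, v, -, rfl⟩
  have hdiff (w : F) : Matrix.single i i w - Matrix.single i.rev i.rev w ∈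
      matCurrent K F (formSkew ε K) := by
    simpa [formAdjoint_single, hε.ne_zero] using
      hε.sub_formAdjoint_mem_matCurrent (Matrix.single i i w)
  have hsum : Matrix.single i i (u * v - v * u) + Matrix.single i.rev i.rev (u * v - v * u) ∈
      matCurrent K F (formSkew ε K) := by
    convert mul_sub_mul_mem_matCurrent (hdiff u) (hdiff v) using 1
    simp only [sub_mul, mul_sub, Matrix.single_mul_single_same, ne_eq, hi, hi.symm,
      not_false_eq_true, Matrix.single_mul_single_of_ne, single_sub]
    abel
  refine ((matCurrent K F (formSkew ε K)).smul_mem_iff (two_ne_zero (α := K))).1 ?_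
  convert add_mem (hdiff (u * v - v * u)) hsum using 1
  rw [two_smul]
  change Matrix.single i i _ + Matrix.single i i _ = _
  abel

theorem single_mem_matCurrent_of_ne_rev (hε : IsReflexiveWeight ε) [NeZero (2 : K)] {i j : Fin n}
    (hij : i ≠ j) (hij_rev : i ≠ j.rev) (hj : j ≠ j.rev) {x : F} (hx : x ∈ commutatorIdeal K F) :
    Matrix.single i j x ∈ matCurrent K F (formSkew ε K) := by
  suffices h : pSpan K (⊤ : Submodule K F) (bSpan K ⊤ ⊤) ≤
      (matCurrent K F (formSkew ε K)).comap (Matrix.singleLinearMap K i j) from h hx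
  refine span_le.2 ?_
  rintro _ ⟨w, -, c, hc, rfl⟩
  have hi_rev : i.rev ≠ j := fun h => hij_rev (Fin.rev_eq_iff.1 h)
  have hbracket := mul_sub_mul_mem_matCurrent
    (hε.sub_formAdjoint_mem_matCurrent (Matrix.single i j w)) (hε.single_self_mem_matCurrent hj hc)
  simpa [formAdjoint_single, sub_mul, mul_sub, hij.symm, hi_rev, hj] using hbracket

theorem single_mem_matCurrent (hε : IsReflexiveWeight ε) [NeZero (2 : K)] {i j : Fin n}
    (hij : i ≠ j) (hij_rev : i ≠ j.rev) {x : F} (hx : x ∈ commutatorIdeal K F) :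
    Matrix.single i j x ∈ matCurrent K F (formSkew ε K) := by
  by_cases hj : j = j.rev
  · have hi : i.rev ≠ i.rev.rev := by
      rw [Fin.rev_rev]
      grind
    have hadj : formAdjoint ε (Matrix.single i j x) ∈ matCurrent K F (formSkew ε K) := by
      rw [formAdjoint_single]
      refine smul_mem _ _ (hε.single_mem_matCurrent_of_ne_rev ?_ ?_ hi hx)
      · exact fun h => hij (Fin.rev_injective h).symm
      · rw [Fin.rev_rev]
        exact hij_rev.symm
    simpa using add_mem (hε.sub_formAdjoint_mem_matCurrent (Matrix.single i j x)) hadj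
  · exact hε.single_mem_matCurrent_of_ne_rev hij hij_rev hj hx

theorem mem_matCurrent_of_apply_mem (hε : IsReflexiveWeight ε) [NeZero (2 : K)]
    {X : Matrix (Fin n) (Fin n) F}
    (hanti : ∀ i, X i i.rev = 0) (hdiag : ∀ i, X i i ∈ bSpan K (⊤ : Submodule K F) ⊤)
    (hoff : ∀ i j, i ≠ j → X i j ∈ commutatorIdeal K F) :
    X ∈ matCurrent K F (formSkew ε K) := by
  rw [Matrix.matrix_eq_sum_single X]
  refine sum_mem fun i _ => sum_mem fun j _ => ?_
  by_cases hanti_ij : i.rev = j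
  · rw [← hanti_ij, hanti, Matrix.single_zero]
    exact zero_mem _
  have hij_rev : i ≠ j.rev := fun h => hanti_ij (Fin.rev_eq_iff.2 h)
  by_cases hij : i = j
  · subst hij
    exact hε.single_self_mem_matCurrent hij_rev (hdiag i)
  · exact hε.single_mem_matCurrent hij hij_rev (hoff i j hij)

end IsReflexiveWeight

/-- The condition that `diag(d)`, read over the commutative quotient `F ⧸ I₁(F)`, is a similitude
of `revForm ε`: this says that `d_i d_{n-i+1}` is independent of `i`, whatever the weights. -/
def IsSimilitudeModCommutators (K : Type*) [Field K] [Algebra K F] (d : Fin n → Fˣ) : Prop :=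
  ∀ i j, unitClass K (d i) * unitClass K (d i.rev) = unitClass K (d j) * unitClass K (d j.rev)

theorem isSimilitudeModCommutators_iff (d : Fin n → Fˣ) (o : Fin n) :
    IsSimilitudeModCommutators K d ↔
      ∀ i, (d i * d i.rev - d o * d o.rev : F) ∈ commutatorIdeal K F := by
  simp only [mul_sub_mul_mem_commutatorIdeal_iff]
  exact ⟨fun h i => h i o, fun h i j => (h i).trans (h j).symm⟩

theorem IsSimilitudeModCommutators.inv {d : Fin n → Fˣ} (hd : IsSimilitudeModCommutators K d) :
    IsSimilitudeModCommutators K d⁻¹ := fun i j => by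
  simp only [Pi.inv_apply, map_inv, ← mul_inv, hd i j]

namespace IsReflexiveWeight

theorem isSimilitudeModCommutators_of_diagonalConj_mem (hε : IsReflexiveWeight ε) {d : Fin n → Fˣ}
    (hd : ∀ X ∈ matCurrent K F (formSkew ε K),
      diagonalConj K d X ∈ matCurrent K F (formSkew ε K)) :
    IsSimilitudeModCommutators K d := by
  intro i j
  by_cases hij : i = j.rev
  · rw [hij, Fin.rev_rev, mul_comm]
  let Y : Matrix (Fin n) (Fin n) F := .single i j 1 - formAdjoint ε (.single i j 1)
  have hY : Y ∈ formSkew ε F := hε.sub_formAdjoint_mem_formSkew _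
  have hYij : Y i j = 1 := by simp [Y, hij]
  have hmem := hε.add_formAdjoint_apply_mem_commutatorIdeal
    (hd Y (hε.sub_formAdjoint_mem_matCurrent _)) i j
  rw [diagonalConj_add_formAdjoint_apply d hY, hYij, mul_one, mul_one,
    mul_inv_sub_mul_inv_mem_commutatorIdeal_iff] at hmem
  rw [hmem, mul_comm]

theorem diagonalConj_mem_of_mem_formSkew (hε : IsReflexiveWeight ε) [NeZero (2 : K)]
    {d : Fin n → Fˣ} (hd : IsSimilitudeModCommutators K d) {Y : Matrix (Fin n) (Fin n) F}
    (hY : Y ∈ formSkew ε F) : diagonalConj K d Y ∈ matCurrent K F (formSkew ε K) := by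
  let X := diagonalConj K d Y
  have hsym : X + formAdjoint ε X ∈ matCurrent K F (formSkew ε K) := by
    refine hε.mem_matCurrent_of_apply_mem (fun i => ?_) (fun i => ?_) fun i j _ => ?_ <;>
      rw [diagonalConj_add_formAdjoint_apply d hY]
    · rw [Fin.rev_rev, sub_self]
    · exact conj_sub_conj_mem_bSpan K (d i) (d i.rev) (Y i i)
    · refine mul_mul_sub_mul_mul_mem_commutatorIdeal K ?_ (Y i j)
      rw [mul_inv_sub_mul_inv_mem_commutatorIdeal_iff, hd i j, mul_comm]
  refine ((matCurrent K F (formSkew ε K)).smul_mem_iff (two_ne_zero (α := K))).1 ?_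
  convert add_mem (hε.sub_formAdjoint_mem_matCurrent X) hsym using 1
  rw [sub_add_add_cancel, two_smul]

theorem diagonalConj_mem_matCurrent (hε : IsReflexiveWeight ε) [NeZero (2 : K)] {d : Fin n → Fˣ}
    (hd : IsSimilitudeModCommutators K d) {X : Matrix (Fin n) (Fin n) F}
    (hX : X ∈ matCurrent K F (formSkew ε K)) :
    diagonalConj K d X ∈ matCurrent K F (formSkew ε K) := by
  refine lieGen_le_comap (diagonalConj K d).toAlgHom (span_le.2 ?_)
    (fun _ hx _ hy => mul_sub_mul_mem_matCurrent hx hy) hX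
  rintro _ ⟨u, M, hM, rfl⟩
  rw [smul_map_algebraMap]
  exact hε.diagonalConj_mem_of_mem_formSkew hd (map_mem_formSkew _ hM)

theorem image_diagonalConj_matCurrent_eq_iff (hε : IsReflexiveWeight ε) [NeZero (2 : K)]
    (d : Fin n → Fˣ) :
    diagonalConj K d '' matCurrent K F (formSkew ε K) = matCurrent K F (formSkew ε K) ↔
      IsSimilitudeModCommutators K d := by
  rw [image_diagonalConj_eq_iff]
  exact ⟨fun h => hε.isSimilitudeModCommutators_of_diagonalConj_mem h.1, fun h =>
    ⟨fun _ => hε.diagonalConj_mem_matCurrent h, fun _ => hε.diagonalConj_mem_matCurrent h.inv⟩⟩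

end IsReflexiveWeight

end Current

theorem exists_isReflexiveWeight_eq_revForm {K : Type*} [Field K] {n : ℕ}
    {Φ : (Fin n → K) → (Fin n → K) → K}
    (hΦ : (Φ = fun x y => ∑ i : Fin n, x i * y (Fin.rev i)) ∨
          (n % 2 = 0 ∧ Φ = fun x y => ∑ i : Fin n,
            (if (i : ℕ) < n / 2 then x i * y (Fin.rev i) else -(x i * y (Fin.rev i))))) :
    ∃ ε : Fin n → K, IsReflexiveWeight ε ∧ Φ = revForm ε := by
  rcases hΦ with rfl | ⟨hn, rfl⟩
  · exact ⟨1, isReflexiveWeight_one, by simp [funext_iff, revForm]⟩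
  · exact ⟨_, isReflexiveWeight_symplectic hn, by simp [funext_iff, revForm, ite_mul]⟩

theorem statement18_general {K : Type*} [Field K] [NeZero (2 : K)]
    {Fa : Type*} [Ring Fa] [Algebra K Fa] {n : ℕ} {ε : Fin n → K} (hε : IsReflexiveWeight ε)
    (g : Submodule K (Matrix (Fin n) (Fin n) K))
    (hg : ∀ M : Matrix (Fin n) (Fin n) K,
      M ∈ g ↔ ∀ u v, revForm ε (M.mulVec u) v + revForm ε u (M.mulVec v) = 0)
    (d : Fin n → Faˣ) (o : Fin n) :
    {X : Matrix (Fin n) (Fin n) Fa | ∃ Y ∈ matCurrent K Fa g,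
        X = Matrix.diagonal (fun i => (d i : Fa)) * Y *
            Matrix.diagonal (fun i => (((d i)⁻¹ : Faˣ) : Fa))} =
      (matCurrent K Fa g : Set (Matrix (Fin n) (Fin n) Fa)) ↔
    ∀ i : Fin n, (d i : Fa) * (d i.rev : Fa) - (d o : Fa) * (d o.rev : Fa) ∈
      pSpan K (⊤ : Submodule K Fa) (bSpan K ⊤ ⊤) := by
  obtain rfl : g = formSkew ε K := by
    ext M
    rw [hg, hε.mem_formSkew_iff_revForm]
  have himage : {X | ∃ Y ∈ matCurrent K Fa (formSkew ε K),
      X = Matrix.diagonal (fun i => (d i : Fa)) * Y *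
        Matrix.diagonal (fun i => (((d i)⁻¹ : Faˣ) : Fa))} =
      diagonalConj K d '' matCurrent K Fa (formSkew ε K) := by
    ext X
    exact exists_congr fun Y => and_congr_right fun _ => eq_comm
  rw [himage, hε.image_diagonalConj_matCurrent_eq_iff, isSimilitudeModCommutators_iff d o]
  rfl

/-- for `g = o(Φ) ⊆ A = M_n(k)` with `Φ` the split symmetric form `Φ₀`
or (for even `n`) the symplectic form `Φ₁`, an invertible diagonal matrix
`D = diag(f₁,…,f_n)` normalizes `(g,A)(F)` iff `f_i f_{n−i+1} − f₁ f_n ∈ I₁(F) = F·[F,F]`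
for all `i`. -/
theorem statement18 {K : Type*} [Field K] [CharZero K]
    {Fa : Type*} [Ring Fa] [Algebra K Fa]
    (n : ℕ) (hn : 2 ≤ n)
    (Φ : (Fin n → K) → (Fin n → K) → K)
    (hΦ : (Φ = fun x y => ∑ i : Fin n, x i * y (Fin.rev i)) ∨
          (n % 2 = 0 ∧ Φ = fun x y => ∑ i : Fin n,
            (if (i : ℕ) < n / 2 then x i * y (Fin.rev i) else -(x i * y (Fin.rev i)))))
    (g : Submodule K (Matrix (Fin n) (Fin n) K))
    (hg : ∀ M : Matrix (Fin n) (Fin n) K,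
      M ∈ g ↔ ∀ u v : Fin n → K, Φ (M.mulVec u) v + Φ u (M.mulVec v) = 0)
    (d : Fin n → Faˣ) :
    {X : Matrix (Fin n) (Fin n) Fa | ∃ Y ∈ matCurrent K Fa g,
        X = Matrix.diagonal (fun i => (d i : Fa)) * Y *
            Matrix.diagonal (fun i => (((d i)⁻¹ : Faˣ) : Fa))} =
      (matCurrent K Fa g : Set (Matrix (Fin n) (Fin n) Fa)) ↔
    ∀ i : Fin n, (d i : Fa) * (d (Fin.rev i) : Fa) -
        (d (⟨0, by omega⟩ : Fin n) : Fa) * (d (Fin.rev ⟨0, by omega⟩) : Fa) ∈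
      pSpan K (⊤ : Submodule K Fa) (bSpan K ⊤ ⊤) := by
  obtain ⟨ε, hε, rfl⟩ := exists_isReflexiveWeight_eq_revForm hΦ
  exact statement18_general hε g hg d ⟨0, by omega⟩
end
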